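/- arXiv:1308.2432 — 2 statements merged into one kernel-verified Lean document; each statement's English description precedes it below -/
import Mathlib

section
/- For every group G and all finite groups F and F', there exist an action of the wreath product F ≀ F' on the finite set F × F' and an injective group homomorphism from (G ≀ F) ≀ F' into the permutational wreath product G ≀_{F×F'} (F ≀ F') := (∏_{(f,f') ∈ F×F'} G) ⋊ (F ≀ F'), where F ≀ F' acts on ∏_{(f,f') ∈ F×F'} G by permuting the coordinates according to that action. -/
/-- The action of a group `F` on `F → G` permuting the coordinates:
`φ(k)((g_f)_{f ∈ F}) = (g_{f·k})_{f ∈ F}`. -/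
def wreathAction (G F : Type*) [Group G] [Group F] : F →* MulAut (F → G) where
  toFun k :=
    { toFun := fun g f => g (f * k)
      invFun := fun g f => g (f * k⁻¹)
      left_inv := fun g => by funext f; simp [mul_assoc]
      right_inv := fun g => by funext f; simp [mul_assoc]
      map_mul' := fun _ _ => rfl }
  map_one' := by
    ext g f
    simp
  map_mul' k₁ k₂ := by
    ext g f
    simp [mul_assoc]

/-- The (restricted) wreath product `G ≀ F`: the semidirect product `(∏_{f ∈ F} G) ⋊_φ F`
with `φ(k)((g_f)_{f ∈ F}) = (g_{f·k})_{f ∈ F}`. -/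
abbrev WreathProduct (G F : Type*) [Group G] [Group F] :=
  (F → G) ⋊[wreathAction G F] F

/-- Given an action `ρ : W →* Equiv.Perm X`, the induced action of `W` on `X → G` permuting
the coordinates according to `ρ`. -/
def permAction (G : Type*) {W X : Type*} [Group G] [Group W] (ρ : W →* Equiv.Perm X) :
    W →* MulAut (X → G) where
  toFun u :=
    { toFun := fun g x => g ((ρ u)⁻¹ x)
      invFun := fun g x => g (ρ u x)
      left_inv := fun g => by funext x; simp
      right_inv := fun g => by funext x; simp
      map_mul' := fun _ _ => rfl }
  map_one' := by
    ext g x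
    simp
  map_mul' u₁ u₂ := by
    ext g x
    simp

/-!
An element of `(G ≀_X F) ≀_Y K` consists of an element of `G` for every pair `(x, y)`, an element
of `F` for every `y`, and an element of `K`; so does an element of `G ≀_{X × Y} (F ≀_Y K)`. This
reassociation of data is a group homomorphism because `F ≀_Y K` acts on `X × Y` by letting `K`
permute the fibres `X × {y}` and then letting each coordinate in `F` act on its own fibre. The
theorem is the case where `F` and `K` act on themselves by right multiplication.
-/

/-- The permutational wreath product `G ≀_X W`, for an action `ρ` of `W` on `X`. -/
abbrev PermWreathProduct {W X : Type*} (G : Type*) [Group G] [Group W]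
    (ρ : W →* Equiv.Perm X) :=
  (X → G) ⋊[permAction G ρ] W

theorem permAction_apply {G W X : Type*} [Group G] [Group W] (ρ : W →* Equiv.Perm X)
    (w : W) (g : X → G) (x : X) : permAction G ρ w g x = g ((ρ w)⁻¹ x) :=
  rfl

section Associativity

variable {F K X Y : Type*} [Group F] [Group K]

/-- The imprimitive action of `F ≀_Y K` on `X × Y`, for actions `σ` of `F` on `X` and `τ` of `K`
on `Y`. The coordinate of `u` that moves the fibre over `y` is the one at the image of `y`, because
in the semidirect product `u = (u.left, 1) * (1, u.right)` the element of `K` acts first. -/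
def imprimitiveAction (σ : F →* Equiv.Perm X) (τ : K →* Equiv.Perm Y) :
    PermWreathProduct F τ →* Equiv.Perm (X × Y) where
  toFun u :=
    { toFun := fun p => (σ (u.left (τ u.right p.2)) p.1, τ u.right p.2)
      invFun := fun p => ((σ (u.left p.2))⁻¹ p.1, (τ u.right)⁻¹ p.2)
      left_inv := fun p => by simp
      right_inv := fun p => by simp }
  map_one' := by ext p <;> simp
  map_mul' u v := by ext p <;> simp [permAction_apply]

theorem imprimitiveAction_inv_apply (σ : F →* Equiv.Perm X) (τ : K →* Equiv.Perm Y)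
    (u : PermWreathProduct F τ) (p : X × Y) :
    (imprimitiveAction σ τ u)⁻¹ p = ((σ (u.left p.2))⁻¹ p.1, (τ u.right)⁻¹ p.2) :=
  rfl

/-- Associativity of permutational wreath products:
`(G ≀_X F) ≀_Y K ≃* G ≀_{X × Y} (F ≀_Y K)`. -/
def permWreathProductAssoc (G : Type*) [Group G] (σ : F →* Equiv.Perm X)
    (τ : K →* Equiv.Perm Y) :
    PermWreathProduct (PermWreathProduct G σ) τ ≃*
      PermWreathProduct G (imprimitiveAction σ τ) where
  toFun w := ⟨fun p => (w.left p.2).left p.1, ⟨fun y => (w.left y).right, w.right⟩⟩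
  invFun v := ⟨fun y => ⟨fun x => v.left (x, y), v.right.left y⟩, v.right.right⟩
  left_inv _ := rfl
  right_inv _ := rfl
  map_mul' w w' := by
    ext p
    · simp [permAction_apply, imprimitiveAction_inv_apply]
    · simp [permAction_apply]
    · simp

end Associativity

/-- The action of a group on itself by right multiplication, written as a left action:
`k` sends `f` to `f * k⁻¹`. The inverse is spelled out as `f * k`, rather than `f * k⁻¹⁻¹`, so that
the induced `permAction` is definitionally `wreathAction`. -/
def rightRegularAction (F : Type*) [Group F] : F →* Equiv.Perm F where
  toFun k :=
    { toFun := fun f => f * k⁻¹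
      invFun := fun f => f * k
      left_inv := fun f => by simp
      right_inv := fun f => by simp }
  map_one' := by ext; simp
  map_mul' k l := by ext; simp [mul_assoc]

theorem stmt_16_general (G F F' : Type*) [Group G] [Group F] [Group F'] :
    ∃ ρ : WreathProduct F F' →* Equiv.Perm (F × F'),
      Nonempty (WreathProduct (WreathProduct G F) F' ≃* PermWreathProduct G ρ) := by
  change ∃ ρ : PermWreathProduct F (rightRegularAction F') →* Equiv.Perm (F × F'),
    Nonempty (PermWreathProduct (PermWreathProduct G (rightRegularAction F))
      (rightRegularAction F') ≃* PermWreathProduct G ρ)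
  exact ⟨imprimitiveAction _ _, ⟨permWreathProductAssoc G _ _⟩⟩

/-- For every group `G` and all finite groups `F` and `F'`, there exist an
action of the wreath product `F ≀ F'` on the finite set `F × F'` and an injective group
homomorphism from `(G ≀ F) ≀ F'` into the permutational wreath product
`G ≀_{F×F'} (F ≀ F') = (∏_{(f,f') ∈ F×F'} G) ⋊ (F ≀ F')`, where `F ≀ F'` permutes the
coordinates according to that action. -/
theorem stmt_16 (G F F' : Type*) [Group G] [Group F] [Finite F] [Group F'] [Finite F'] :
    ∃ (ρ : WreathProduct F F' →* Equiv.Perm (F × F'))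
      (ψ : WreathProduct (WreathProduct G F) F' →*
        (F × F' → G) ⋊[permAction G ρ] WreathProduct F F'),
      Function.Injective ψ := by
  obtain ⟨ρ, ⟨e⟩⟩ := stmt_16_general G F F'
  exact ⟨ρ, e.toMonoidHom, e.injective⟩
end

section
/- Let G be a group, Y a topological space with a continuous G-action, X ⊆ Y a subspace, and H : Y × [0,1] → Y a continuous map such that H(y,0) ∈ X for all y ∈ Y, H(x,0) = x for all x ∈ X, H(y,1) = y for all y ∈ Y, and H(H(y,t'),t) = H(y, t·t') for all y ∈ Y and t,t' ∈ [0,1]. Define Ω : ⨿_{j=0}^∞ ((G × [0,1])^j × G × X) → Y inductively by Ω(g₀,x) := g₀·x and Ω(g_j,t_j,g_{j−1},…) := g_j · H(Ω(g_{j−1},…), t_j) for j ≥ 1. Then Ψ := (z ↦ H(Ω(z),0)) is a strong homotopy action of G on X. -/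
/-- A *strong homotopy action* of a group `G` on a topological space `X`: a continuous map
`Ψ : ∐_{j=0}^∞ ((G × [0,1])^j × G × X) → X` (given here by its restrictions `Ψ j` to the
summands, so continuity of `Ψ` is the continuity of every `Ψ j`) satisfying the conditions
(1)–(6).  A point of the `j`-th summand is written `(c, g₀, x)` where
`c i = (g_{i+1}, t_{i+1})`, so that `(c, g₀, x)` encodes the tuple
`(g_j, t_j, g_{j-1}, …, g_1, t_1, g_0, x)`. -/
def IsStrongHomotopyAction (G X : Type*) [Group G] [TopologicalSpace G] [TopologicalSpace X]
    (Ψ : ∀ j : ℕ, ((Fin j → G × unitInterval) × G × X) → X) : Prop :=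
  -- `Ψ` is continuous
  (∀ j : ℕ, Continuous (Ψ j)) ∧
  -- (1) `Ψ(…, g_l, 0, g_{l-1}, …) = Ψ(…, g_l, Ψ(g_{l-1}, …))`
  (∀ (j : ℕ) (c : Fin j → G × unitInterval) (g₀ : G) (x : X) (l : Fin j),
    (c l).2 = 0 →
    Ψ j (c, g₀, x) =
      Ψ (j - (l.1 + 1))
        (fun i => c ⟨l.1 + 1 + i.1, by have := i.isLt; have := l.isLt; omega⟩, (c l).1,
          Ψ l.1 (fun i => c ⟨i.1, by have := i.isLt; have := l.isLt; omega⟩, g₀, x))) ∧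
  -- (2) `Ψ(…, g_l, 1, g_{l-1}, …) = Ψ(…, g_l·g_{l-1}, …)`, innermost case …
  (∀ (j : ℕ) (c : Fin j → G × unitInterval) (g₀ : G) (x : X) (h : 0 < j),
    (c ⟨0, h⟩).2 = 1 →
    Ψ j (c, g₀, x) =
      Ψ (j - 1) (fun i => c ⟨i.1 + 1, by have := i.isLt; omega⟩, (c ⟨0, h⟩).1 * g₀, x)) ∧
  -- … and interior case
  (∀ (j : ℕ) (c : Fin j → G × unitInterval) (g₀ : G) (x : X) (l : Fin j),
    1 ≤ l.1 → (c l).2 = 1 →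
    Ψ j (c, g₀, x) =
      Ψ (j - 1)
        (fun i =>
          if i.1 < l.1 - 1 then c ⟨i.1, by have := i.isLt; omega⟩
          else if i.1 = l.1 - 1 then
            ((c l).1 * (c ⟨l.1 - 1, by have := l.isLt; omega⟩).1,
              (c ⟨l.1 - 1, by have := l.isLt; omega⟩).2)
          else c ⟨i.1 + 1, by have := i.isLt; omega⟩, g₀, x)) ∧
  -- (3) `Ψ(e, t_j, g_{j-1}, …) = Ψ(g_{j-1}, …)`
  (∀ (j : ℕ) (c : Fin j → G × unitInterval) (g₀ : G) (x : X) (h : 0 < j),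
    (c ⟨j - 1, by omega⟩).1 = 1 →
    Ψ j (c, g₀, x) = Ψ (j - 1) (fun i => c ⟨i.1, by have := i.isLt; omega⟩, g₀, x)) ∧
  -- (4) `Ψ(…, t_l, e, t_{l-1}, …) = Ψ(…, t_l·t_{l-1}, …)`
  (∀ (j : ℕ) (c : Fin j → G × unitInterval) (g₀ : G) (x : X) (m : Fin j) (h : m.1 + 1 < j),
    (c m).1 = 1 →
    Ψ j (c, g₀, x) =
      Ψ (j - 1)
        (fun i =>
          if i.1 < m.1 then c ⟨i.1, by have := i.isLt; omega⟩
          else if i.1 = m.1 then ((c ⟨m.1 + 1, h⟩).1, (c ⟨m.1 + 1, h⟩).2 * (c m).2)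
          else c ⟨i.1 + 1, by have := i.isLt; omega⟩, g₀, x)) ∧
  -- (5) `Ψ(…, t_1, e, x) = Ψ(…, x)`
  (∀ (j : ℕ) (c : Fin j → G × unitInterval) (x : X) (h : 0 < j),
    Ψ j (c, 1, x) =
      Ψ (j - 1) (fun i => c ⟨i.1 + 1, by have := i.isLt; omega⟩, (c ⟨0, h⟩).1, x)) ∧
  -- (6) `Ψ(e, x) = x`
  (∀ (c : Fin 0 → G × unitInterval) (x : X), Ψ 0 (c, (1 : G), x) = x)

/-!
Each letter `(g, t)` acts on `Y` by `y ↦ g • H (y, t)`, and `Ω` is the composite of the letters of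
a word applied to `g₀ • x`. The relations for `Ψ` are thus local identities between composites of
one or two letters: a letter at time `1` acts through its group element alone, and
`H (H (y, t'), t) = H (y, t * t')` lets a letter `(e, t')` be absorbed by the next one or, at the
outer end of the word, by the final `H (·, 0)`. At the inner end, points of `X` are fixed by `H` at
all times because they are fixed at time `0`.
-/

section Fold

variable {α Y : Type*} (f : Y → α → Y)

theorem foldl_split {j l k : ℕ} (h : l + 1 + k = j) (c : Fin j → α) (y : Y) :
    Fin.foldl j (fun z i => f z (c i)) y =
      Fin.foldl k (fun z i => f z (c ⟨l + 1 + i, by omega⟩))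
        (f (Fin.foldl l (fun z i => f z (c ⟨i, by omega⟩)) y) (c ⟨l, by omega⟩)) := by
  subst h
  rw [Fin.foldl_add, Fin.foldl_succ_last]
  rfl

theorem foldl_merge {j m : ℕ} (h : m + 1 < j) (c : Fin j → α) (a : α)
    (ha : ∀ z, f (f z (c ⟨m, by omega⟩)) (c ⟨m + 1, h⟩) = f z a) (y : Y) :
    Fin.foldl j (fun z i => f z (c i)) y =
      Fin.foldl (j - 1) (fun z i => f z
        (if i.1 < m then c ⟨i, by omega⟩ else if i.1 = m then a else c ⟨i + 1, by omega⟩)) y := by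
  obtain ⟨k, rfl⟩ := Nat.exists_eq_add_of_le (show m + 1 + 1 ≤ j from h)
  let c' : Fin (m + 1 + 1 + k - 1) → α := fun i =>
    if i.1 < m then c ⟨i, by omega⟩ else if i.1 = m then a else c ⟨i + 1, by omega⟩
  have initial (i : Fin m) : c' ⟨i, by omega⟩ = c ⟨i, by omega⟩ := if_pos i.isLt
  have merged : c' ⟨m, by omega⟩ = a := by simp [c']
  have final (i : Fin k) : c' ⟨m + 1 + i, by omega⟩ = c ⟨m + 1 + 1 + i, by omega⟩ := by
    simp only [c', if_neg (show ¬ m + 1 + i.1 < m by omega),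
      if_neg (show ¬ m + 1 + i.1 = m by omega), Nat.add_right_comm (m + 1) i.1 1]
  calc Fin.foldl (m + 1 + 1 + k) (fun z i => f z (c i)) y
      = Fin.foldl k (fun z i => f z (c ⟨m + 1 + 1 + i, by omega⟩))
          (f (f (Fin.foldl m (fun z i => f z (c ⟨i, by omega⟩)) y) (c ⟨m, by omega⟩))
            (c ⟨m + 1, h⟩)) := by
        rw [foldl_split f rfl, Fin.foldl_succ_last]
        rfl
    _ = Fin.foldl (m + 1 + 1 + k - 1) (fun z i => f z (c' i)) y := by
        rw [foldl_split f (show m + 1 + k = m + 1 + 1 + k - 1 by omega) c']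
        simp only [initial, merged, final, ha]

end Fold

section HomotopyWord

variable {G T Y : Type*}

/-- The action `y ↦ g • H (y, t)` on `Y` of a single letter `(g, t)` of a word. The times may range
over an arbitrary type `T`. -/
def homotopyStep [SMul G Y] (H : Y × T → Y) (y : Y) (p : G × T) : Y :=
  p.1 • H (y, p.2)

/-- The composite action on `Y` of the letters of a word `c`, with `c 0` acting first. The paper's
`Ω (g_j, t_j, …, g₀, x)` is `homotopyWord H c (g₀ • x)` where `c i = (g_{i+1}, t_{i+1})`. -/
def homotopyWord [SMul G Y] (H : Y × T → Y) {j : ℕ} (c : Fin j → G × T) (y : Y) : Y :=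
  Fin.foldl j (fun z i => homotopyStep H z (c i)) y

section SMul

variable [SMul G Y] (H : Y × T → Y) {j : ℕ}

theorem homotopyWord_zero (c : Fin 0 → G × T) (y : Y) : homotopyWord H c y = y :=
  Fin.foldl_zero ..

theorem homotopyWord_succ (c : Fin (j + 1) → G × T) (y : Y) :
    homotopyWord H c y = homotopyWord H (fun i => c i.succ) (homotopyStep H y (c 0)) :=
  Fin.foldl_succ ..

theorem homotopyWord_succ_last (c : Fin (j + 1) → G × T) (y : Y) :
    homotopyWord H c y =
      homotopyStep H (homotopyWord H (fun i => c i.castSucc) y) (c (Fin.last j)) :=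
  Fin.foldl_succ_last ..

theorem homotopyWord_split (c : Fin j → G × T) {l : Fin j} {t : T} (hc : (c l).2 = t) (y : Y) :
    homotopyWord H c y =
      homotopyWord H (fun i : Fin (j - (l + 1)) => c ⟨l + 1 + i, by omega⟩)
        ((c l).1 • H (homotopyWord H (fun i : Fin l => c ⟨i, by omega⟩) y, t)) := by
  subst hc
  exact foldl_split (homotopyStep H) (by omega) c y

theorem homotopyWord_of_first_fixed (c : Fin (j + 1) → G × T) {y : Y} (hy : H (y, (c 0).2) = y) :
    homotopyWord H c y = homotopyWord H (fun i => c i.succ) ((c 0).1 • y) := by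
  rw [homotopyWord_succ, homotopyStep, hy]

theorem eq_homotopyWord_of_rec {Z : Type*} {p : Z → Y} {Ω : ∀ j : ℕ, (Fin j → G × T) × Z → Y}
    (zero : ∀ c z, Ω 0 (c, z) = p z)
    (succ : ∀ j (c : Fin (j + 1) → G × T) z, Ω (j + 1) (c, z) =
      homotopyStep H (Ω j (fun i => c i.castSucc, z)) (c (Fin.last j))) :
    Ω = fun _ w => homotopyWord H w.1 (p w.2) := by
  funext j ⟨c, z⟩
  induction j with
  | zero => rw [zero, homotopyWord_zero]
  | succ j ih => rw [succ, ih, homotopyWord_succ_last]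

theorem continuous_homotopyWord [TopologicalSpace G] [TopologicalSpace T] [TopologicalSpace Y]
    [ContinuousSMul G Y] (hH : Continuous H) :
    ∀ j : ℕ, Continuous fun w : (Fin j → G × T) × Y => homotopyWord H w.1 w.2
  | 0 => by simpa only [homotopyWord_zero] using continuous_snd
  | j + 1 => by
    have ih := continuous_homotopyWord hH j
    simp only [homotopyWord_succ_last, homotopyStep]
    fun_prop

end SMul

section Monoid

variable [Monoid G] [MulAction G Y] {H : Y × T → Y} {j : ℕ}

theorem homotopyStep_smul_of_snd_eq_one [One T] (H_one : ∀ y, H (y, 1) = y) {p : G × T}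
    (hp : p.2 = 1) (h : G) (y : Y) :
    homotopyStep H (h • y) p = (p.1 * h) • y := by
  rw [homotopyStep, hp, H_one, mul_smul]

theorem homotopyWord_smul_of_first_snd_eq_one [One T] (H_one : ∀ y, H (y, 1) = y)
    (c : Fin (j + 1) → G × T) (hc : (c 0).2 = 1) (h : G) (y : Y) :
    homotopyWord H c (h • y) = homotopyWord H (fun i => c i.succ) (((c 0).1 * h) • y) := by
  rw [homotopyWord_succ, homotopyStep_smul_of_snd_eq_one H_one hc]

theorem homotopyWord_merge_of_snd_eq_one [One T] (H_one : ∀ y, H (y, 1) = y) (c : Fin j → G × T)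
    {m : ℕ} (hm : m + 1 < j) (hc : (c ⟨m + 1, hm⟩).2 = 1) (y : Y) :
    homotopyWord H c y = homotopyWord H (fun i : Fin (j - 1) =>
      if i.1 < m then c ⟨i, by omega⟩
      else if i.1 = m then ((c ⟨m + 1, hm⟩).1 * (c ⟨m, by omega⟩).1, (c ⟨m, by omega⟩).2)
      else c ⟨i + 1, by omega⟩) y :=
  foldl_merge (homotopyStep H) hm c _ (fun _ => homotopyStep_smul_of_snd_eq_one H_one hc _ _) y

theorem homotopyWord_merge_of_fst_eq_one [Mul T]
    (H_mul : ∀ y t t', H (H (y, t'), t) = H (y, t * t')) (c : Fin j → G × T)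
    {m : ℕ} (hm : m + 1 < j) (hc : (c ⟨m, by omega⟩).1 = 1) (y : Y) :
    homotopyWord H c y = homotopyWord H (fun i : Fin (j - 1) =>
      if i.1 < m then c ⟨i, by omega⟩
      else if i.1 = m then ((c ⟨m + 1, hm⟩).1, (c ⟨m + 1, hm⟩).2 * (c ⟨m, by omega⟩).2)
      else c ⟨i + 1, by omega⟩) y :=
  foldl_merge (homotopyStep H) hm c _
    (fun _ => by simp only [homotopyStep, hc, one_smul, H_mul]) y

theorem apply_zero_homotopyWord_of_last_fst_eq_one [MulZeroClass T]
    (H_mul : ∀ y t t', H (H (y, t'), t) = H (y, t * t')) (c : Fin (j + 1) → G × T)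
    (hc : (c (Fin.last j)).1 = 1) (y : Y) :
    H (homotopyWord H c y, 0) = H (homotopyWord H (fun i => c i.castSucc) y, 0) := by
  rw [homotopyWord_succ_last, homotopyStep, hc, one_smul, H_mul, zero_mul]

end Monoid

theorem apply_eq_self_of_apply_zero_eq_self [MulZeroClass T] {H : Y × T → Y}
    (H_mul : ∀ y t t', H (H (y, t'), t) = H (y, t * t')) {x : Y} (hx : H (x, 0) = x) (t : T) :
    H (x, t) = x := by
  calc H (x, t) = H (H (x, 0), t) := by rw [hx]
    _ = x := by rw [H_mul, mul_zero, hx]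

end HomotopyWord

/-- Let `G` be a group, `Y` a topological space with a continuous
`G`-action, `X ⊆ Y` a subspace, and `H : Y × [0,1] → Y` a continuous map with `H(y,0) ∈ X`,
`H(x,0) = x` for `x ∈ X`, `H(y,1) = y`, and `H(H(y,t'),t) = H(y,t·t')`.  Define
`Ω : ∐_j ((G × [0,1])^j × G × X) → Y` inductively by `Ω(g₀,x) := g₀·x` and
`Ω(g_j,t_j,g_{j-1},…) := g_j · H(Ω(g_{j-1},…), t_j)`.  Then `Ψ := (z ↦ H(Ω(z),0))` is a
strong homotopy action of `G` on `X`. -/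
theorem stmt_18 (G : Type*) [Group G] [TopologicalSpace G]
    (Y : Type*) [TopologicalSpace Y] [MulAction G Y] [ContinuousSMul G Y]
    (X : Set Y) (H : Y × unitInterval → Y)
    (hHcont : Continuous H)
    (hH0mem : ∀ y : Y, H (y, 0) ∈ X)
    (hH0id : ∀ x ∈ X, H (x, 0) = x)
    (hH1 : ∀ y : Y, H (y, 1) = y)
    (hHmul : ∀ (y : Y) (t t' : unitInterval), H (H (y, t'), t) = H (y, t * t'))
    (Ω : ∀ j : ℕ, ((Fin j → G × unitInterval) × G × X) → Y)
    (hΩ0 : ∀ (c : Fin 0 → G × unitInterval) (g₀ : G) (x : X), Ω 0 (c, g₀, x) = g₀ • (x : Y))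
    (hΩsucc : ∀ (j : ℕ) (c : Fin (j + 1) → G × unitInterval) (g₀ : G) (x : X),
      Ω (j + 1) (c, g₀, x) =
        (c (Fin.last j)).1 • H (Ω j (fun i => c i.castSucc, g₀, x), (c (Fin.last j)).2)) :
    IsStrongHomotopyAction G X (fun j z => (⟨H (Ω j z, 0), hH0mem _⟩ : X)) := by
  obtain rfl := eq_homotopyWord_of_rec H (p := fun z : G × X => z.1 • (z.2 : Y))
    (fun c z => hΩ0 c z.1 z.2) (fun j c z => hΩsucc j c z.1 z.2)
  have end_congr {y y' : Y} (h : y = y') : (⟨H (y, 0), hH0mem y⟩ : X) = ⟨H (y', 0), hH0mem y'⟩ :=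
    Subtype.ext (congrArg (fun z => H (z, 0)) h)
  have fixed (x : X) (t : unitInterval) : H (x, t) = x :=
    apply_eq_self_of_apply_zero_eq_self hHmul (hH0id x x.2) t
  refine ⟨fun j => ?_, fun j c g₀ x l hc => end_congr (homotopyWord_split H c hc _), ?_, ?_, ?_,
    fun j c g₀ x m hm hc => end_congr (homotopyWord_merge_of_fst_eq_one hHmul c hm hc _), ?_, ?_⟩
  · have := continuous_homotopyWord (G := G) H hHcont j
    fun_prop
  · rintro (_ | j) c g₀ x hj hc
    · exact absurd hj (lt_irrefl 0)
    · exact end_congr (homotopyWord_smul_of_first_snd_eq_one hH1 c hc g₀ (x : Y))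
  · rintro j c g₀ x ⟨_ | m, hm⟩ hl hc
    · exact absurd hl (Nat.not_succ_le_zero 0)
    · exact end_congr (homotopyWord_merge_of_snd_eq_one hH1 c hm hc _)
  · rintro (_ | j) c g₀ x hj hc
    · exact absurd hj (lt_irrefl 0)
    · exact Subtype.ext (apply_zero_homotopyWord_of_last_fst_eq_one hHmul c hc _)
  · rintro (_ | j) c x hj
    · exact absurd hj (lt_irrefl 0)
    · exact end_congr ((congrArg (homotopyWord H c) (one_smul G (x : Y))).trans
        (homotopyWord_of_first_fixed H c (fixed x _)))
  · exact fun c x => Subtype.ext (by simp only [homotopyWord_zero, one_smul, hH0id x x.2])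
end
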